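/- Fix a ∈ ℝ and define c_k := (1/2)·binomial(2k, k)·a^k for every integer k ≥ 0 (so c_0 = 1/2 and c_1 = a). Then for every integer l ≥ 1: c_{l+1} = 3·c_1·c_l + Σ_{j=1}^{l−1} c_{l−j}·( 4·c_1·c_j − c_{j+1} ). -/

import Mathlib

/-! The generating function of the central binomial coefficients is `(1 - 4x)^(-1/2)`, so the
convolution square of `c` is a geometric progression of ratio `4a = 4c₁`. Its terms of index
`l + 1` and `l` are therefore related by `∑ c_i c_{l+1-i} = 4c₁ ∑ c_i c_{l-i}`, and since
`2c₀ = 1` the two extreme terms of each sum add up to `c_{l+1}` and `c_l`; solving for `c_{l+1}`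
gives the recursion.
-/

open Finset

section Convolution

variable {R : Type*} [CommSemiring R]

theorem two_mul_sum_antidiagonal_fst_mul (f : ℕ → R) (n : ℕ) :
    2 * ∑ p ∈ antidiagonal n, (p.1 : R) * (f p.1 * f p.2) =
      n * ∑ p ∈ antidiagonal n, f p.1 * f p.2 := by
  have swap : ∑ p ∈ antidiagonal n, (p.1 : R) * (f p.1 * f p.2) =
      ∑ p ∈ antidiagonal n, (p.2 : R) * (f p.1 * f p.2) := by
    rw [← Nat.sum_antidiagonal_swap]
    exact sum_congr rfl fun p _ ↦ by rw [Prod.fst_swap, Prod.snd_swap, mul_comm (f p.2)]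
  rw [two_mul]
  nth_rw 2 [swap]
  rw [← sum_add_distrib, mul_sum]
  refine sum_congr rfl fun p hp ↦ ?_
  rw [← add_mul, ← Nat.cast_add, mem_antidiagonal.mp hp]

theorem sum_antidiagonal_succ_eq_two_mul_add_sum_range (f : ℕ → R) (n : ℕ) :
    ∑ p ∈ antidiagonal (n + 1), f p.1 * f p.2 =
      2 * f 0 * f (n + 1) + ∑ j ∈ range n, f (j + 1) * f (n - j) := by
  rw [Nat.sum_antidiagonal_eq_sum_range_succ (fun i j ↦ f i * f j), sum_range_succ,
    sum_range_succ']
  simp only [Nat.add_sub_add_right, Nat.sub_zero, Nat.sub_self]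
  ring

end Convolution

theorem sum_antidiagonal_centralBinom_mul_centralBinom (n : ℕ) :
    ∑ p ∈ antidiagonal n, p.1.centralBinom * p.2.centralBinom = 4 ^ n := by
  have weighted (m : ℕ) :
      2 * ∑ p ∈ antidiagonal m, p.1 * (p.1.centralBinom * p.2.centralBinom) =
        m * ∑ p ∈ antidiagonal m, p.1.centralBinom * p.2.centralBinom :=
    two_mul_sum_antidiagonal_fst_mul Nat.centralBinom m
  induction n with
  | zero => simp
  | succ n ih =>
    -- By symmetry the weight `n + 1 = i + j` may be replaced by `2i`, and
    -- `i * centralBinom i = 2 * (2 * i - 1) * centralBinom (i - 1)` lowers the degree.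
    refine Nat.eq_of_mul_eq_mul_left n.succ_pos ?_
    calc (n + 1) * ∑ p ∈ antidiagonal (n + 1), p.1.centralBinom * p.2.centralBinom
        = 2 * ∑ p ∈ antidiagonal (n + 1), p.1 * (p.1.centralBinom * p.2.centralBinom) :=
          (weighted (n + 1)).symm
      _ = 2 * ∑ p ∈ antidiagonal n,
            (p.1 + 1) * (p.1 + 1).centralBinom * p.2.centralBinom := by
          simp only [Nat.sum_antidiagonal_succ, zero_mul, zero_add, mul_assoc]
      _ = 4 * (2 * (∑ p ∈ antidiagonal n, p.1 * (p.1.centralBinom * p.2.centralBinom)) +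
            ∑ p ∈ antidiagonal n, p.1.centralBinom * p.2.centralBinom) := by
          simp only [Nat.succ_mul_centralBinom_succ, mul_sum, ← sum_add_distrib]
          exact sum_congr rfl fun p _ ↦ by ring
      _ = (n + 1) * 4 ^ (n + 1) := by rw [weighted, ih]; ring

theorem sum_antidiagonal_mul_centralBinom_mul_pow {R : Type*} [CommSemiring R] (b a : R) (n : ℕ) :
    ∑ p ∈ antidiagonal n,
        (b * p.1.centralBinom * a ^ p.1) * (b * p.2.centralBinom * a ^ p.2) =
      b ^ 2 * (4 * a) ^ n := by
  have h : ((∑ p ∈ antidiagonal n, p.1.centralBinom * p.2.centralBinom : ℕ) : R) = 4 ^ n :=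
    mod_cast congrArg Nat.cast (sum_antidiagonal_centralBinom_mul_centralBinom n)
  rw [mul_pow, ← h, Nat.cast_sum, sum_mul, mul_sum]
  refine sum_congr rfl fun p hp ↦ ?_
  rw [← mem_antidiagonal.mp hp, Nat.cast_mul]
  ring

section Recursion

variable {R : Type*} [CommRing R]

theorem lenard_recursion_of_sum_antidiagonal_succ (c : ℕ → R) (h₀ : 2 * c 0 = 1) {l : ℕ}
    (hl : 1 ≤ l)
    (hsq : ∑ p ∈ antidiagonal (l + 1), c p.1 * c p.2 =
      4 * c 1 * ∑ p ∈ antidiagonal l, c p.1 * c p.2) :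
    c (l + 1) = 3 * c 1 * c l
      + ∑ j ∈ Icc 1 (l - 1), c (l - j) * (4 * c 1 * c j - c (j + 1)) := by
  obtain ⟨m, rfl⟩ := Nat.exists_eq_add_of_le' hl
  have hsum : ∑ j ∈ Icc 1 m, c (m + 1 - j) * (4 * c 1 * c j - c (j + 1)) =
      4 * c 1 * ∑ j ∈ range m, c (j + 1) * c (m - j)
        - ∑ j ∈ range m, c (j + 2) * c (m - j) := by
    rw [← Ico_add_one_right_eq_Icc, sum_Ico_eq_sum_range, mul_sum, ← sum_sub_distrib]
    refine sum_congr rfl fun j _ ↦ ?_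
    rw [add_comm 1 j, Nat.add_sub_add_right]
    ring
  rw [sum_antidiagonal_succ_eq_two_mul_add_sum_range,
    sum_antidiagonal_succ_eq_two_mul_add_sum_range, h₀, sum_range_succ'] at hsq
  simp only [Nat.add_sub_add_right, Nat.sub_zero, zero_add] at hsq
  rw [Nat.add_sub_cancel, hsum]
  linear_combination hsq

theorem central_binomial_recursion_general [Invertible (2 : R)] (a : R) (c : ℕ → R)
    (hc : ∀ k : ℕ, c k = ⅟2 * (Nat.choose (2 * k) k : R) * a ^ k) {l : ℕ} (hl : 1 ≤ l) :
    c (l + 1) = 3 * c 1 * c l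
      + ∑ j ∈ Icc 1 (l - 1), c (l - j) * (4 * c 1 * c j - c (j + 1)) := by
  have h₀ : 2 * c 0 = 1 := by simp [hc]
  have h₁ : c 1 = a := by simp [hc]
  have hsq (n : ℕ) : ∑ p ∈ antidiagonal n, c p.1 * c p.2 = (⅟2) ^ 2 * (4 * a) ^ n := by
    simp only [hc, ← Nat.centralBinom_eq_two_mul_choose,
      sum_antidiagonal_mul_centralBinom_mul_pow]
  refine lenard_recursion_of_sum_antidiagonal_succ c h₀ hl ?_
  rw [hsq, hsq, h₁]
  ring

end Recursion

/-- **Discrete recursion for the constant terms of the Lenard operators** (key computation in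
Lemma 3.2 of the paper): the sequence `c_k = (1/2)·C(2k, k)·aᵏ` satisfies
`c_{l+1} = 3 c₁ c_l + ∑_{j=1}^{l-1} c_{l-j} (4 c₁ c_j - c_{j+1})` for every `l ≥ 1`. -/
theorem central_binomial_recursion (a : ℝ) (c : ℕ → ℝ)
    (hc : ∀ k : ℕ, c k = (1 / 2) * (Nat.choose (2 * k) k : ℝ) * a ^ k) :
    ∀ l : ℕ, 1 ≤ l →
      c (l + 1) = 3 * c 1 * c l
        + ∑ j ∈ Finset.Icc 1 (l - 1), c (l - j) * (4 * c 1 * c j - c (j + 1)) := by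
  exact fun _ hl ↦ central_binomial_recursion_general a c (by simpa using hc) hl
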